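/- Let ‖·‖_p be any norm on D×D real matrices with dual norm ‖·‖_d, and set σ(‖G‖_p) = sup{‖Z‖_F : ‖Z‖_d = 1}. Let Δ > 0, let g be a standard Gaussian random vector in ℝ^M, and let G, G₁, …, G_M be i.i.d. random D×D matrices with entries i.i.d. standard Gaussian N(0,1), independent of g. Then E[ sup over unit vectors v ∈ ℝ^M and matrices Y with ‖Y‖_d = 1 of ( Δ·⟨g, v⟩ + ⟨Σ_{i=1}^M v_i G_i, Y⟩ ) ] ≤ E[‖G‖_p] + √(M·(Δ² + σ(‖G‖_p)²)). -/

import Mathlib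

open Matrix MeasureTheory ProbabilityTheory

/-- The trace inner product `⟨X, Y⟩ = trace(Xᵀ Y)` on real matrices. -/
noncomputable def matInner {m n : Type*} [Fintype m] [Fintype n]
    (X Y : Matrix m n ℝ) : ℝ :=
  Matrix.trace (Xᵀ * Y)

/-- The dual norm `‖X‖_d = sup {⟨Y, X⟩ : ‖Y‖_p = 1}` of a norm `N` on matrices. -/
noncomputable def dualNorm {D : Type*} [Fintype D]
    (N : Matrix D D ℝ → ℝ) (X : Matrix D D ℝ) : ℝ :=
  sSup {c : ℝ | ∃ Y : Matrix D D ℝ, N Y = 1 ∧ c = matInner Y X}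

/-- `σ(‖G‖_p) = sup {‖Z‖_F : ‖Z‖_d = 1}`. -/
noncomputable def sigmaP {D : Type*} [Fintype D] (N : Matrix D D ℝ → ℝ) : ℝ :=
  sSup {c : ℝ | ∃ Z : Matrix D D ℝ, dualNorm N Z = 1 ∧
    c = Real.sqrt (∑ i, ∑ j, Z i j ^ 2)}

/-- The law of a `D × D` random matrix (presented as `Fin D → Fin D → ℝ`) with
i.i.d. standard Gaussian `N(0,1)` entries. -/
noncomputable def iidGaussianMatrix (D : ℕ) : Measure (Fin D → Fin D → ℝ) :=
  Measure.pi fun _ : Fin D => Measure.pi fun _ : Fin D => gaussianReal 0 1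

/-! The process `Δ⟨g, v⟩ + ⟨∑ i, v i • G i, Y⟩` is compared with `⟨H, Y⟩ + √(Δ² + σ²)⟨h, v⟩`, where
`H` and `h` are an independent standard Gaussian matrix and vector.  For unit vectors `v`, `v'` and
`‖Y‖_F, ‖Y'‖_F ≤ σ`, the variance of the increment of the second process exceeds that of the first
by `2 (1 - ⟨v, v'⟩) (σ² - ⟨Y, Y'⟩) ≥ 0`, so by the Sudakov–Fernique inequality the second process
has the larger expected supremum, which is at most `E‖H‖_p + √(Δ² + σ²) E‖h‖`.

For finitely many indices, Sudakov–Fernique is proved by smoothing the maximum to a log-sum-exp and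
interpolating between independent copies `x` and `z` of the processes by `cos t • x + sin t • z`.
Gaussian integration by parts writes the derivative in `t` as a nonnegative combination of the
differences of the variances of the increments.  The smoothing error disappears after scaling both
processes up, and finite nets give the case of an arbitrary bounded index set. -/

open Real

section Stein

theorem hasDerivAt_gaussianPDFReal (m : ℝ) (v : NNReal) (x : ℝ) :
    HasDerivAt (gaussianPDFReal m v) (-((x - m) / v) * gaussianPDFReal m v x) x := by
  have hexp : HasDerivAt (fun y : ℝ => -(y - m) ^ 2 / (2 * v)) (-((x - m) / v)) x := by
    refine ((((hasDerivAt_id x).sub_const m).fun_pow 2).neg.div_const (2 * (v : ℝ))).congr_deriv ?_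
    simp only [id_eq]
    ring
  rw [gaussianPDFReal_def]
  exact (hexp.exp.const_mul _).congr_deriv (by ring)

theorem integrable_gaussianReal_iff {m : ℝ} {v : NNReal} (hv : v ≠ 0) {f : ℝ → ℝ} :
    Integrable f (gaussianReal m v) ↔ Integrable fun x => gaussianPDFReal m v x * f x := by
  rw [gaussianReal_of_var_ne_zero m hv, integrable_withDensity_iff_integrable_smul'
    (measurable_gaussianPDF m v) (ae_of_all _ fun _ => gaussianPDF_lt_top)]
  simp only [toReal_gaussianPDF, smul_eq_mul]

theorem integral_sub_mul_gaussianReal (m : ℝ) (v : NNReal) {f f' : ℝ → ℝ}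
    (hf : ∀ x, HasDerivAt f (f' x) x) (hf_int : Integrable f (gaussianReal m v))
    (hf'_int : Integrable f' (gaussianReal m v))
    (hxf_int : Integrable (fun x => (x - m) * f x) (gaussianReal m v)) :
    ∫ x, (x - m) * f x ∂gaussianReal m v = v * ∫ x, f' x ∂gaussianReal m v := by
  rcases eq_or_ne v 0 with rfl | hv
  · simp
  have hv' : (v : ℝ) ≠ 0 := by exact_mod_cast hv
  rw [integrable_gaussianReal_iff hv] at hf_int hf'_int hxf_int
  have hpdf_deriv : ∀ x, v⁻¹ * (gaussianPDFReal m v x * ((x - m) * f x)) =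
      -(-((x - m) / v) * gaussianPDFReal m v x * f x) := fun x => by
    push_cast
    ring
  have by_parts := integral_mul_deriv_eq_deriv_mul_of_integrable
    (fun x _ => hasDerivAt_gaussianPDFReal m v x) (fun x _ => hf x) hf'_int
    ((hxf_int.const_mul (v⁻¹ : NNReal)).neg.congr <| ae_of_all _ fun x => by
      simp only [Pi.neg_apply, hpdf_deriv, neg_neg, Pi.mul_apply]) hf_int
  simp only [integral_gaussianReal_eq_integral_smul hv, smul_eq_mul]
  rw [by_parts, ← integral_neg]
  simp only [← hpdf_deriv, integral_const_mul]
  push_cast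
  rw [mul_inv_cancel_left₀ hv']

end Stein

section Resampling

variable {ι : Type*} [Fintype ι] [DecidableEq ι] {X : ι → Type*} [∀ i, MeasurableSpace (X i)]

theorem measurePreserving_update (μ : ∀ i, Measure (X i)) [∀ i, IsProbabilityMeasure (μ i)]
    (i : ι) :
    MeasurePreserving (fun q : (∀ j, X j) × X i => Function.update q.1 i q.2)
      ((Measure.pi μ).prod (μ i)) (Measure.pi μ) := by
  have hmeas : Measurable fun q : (∀ j, X j) × X i => Function.update q.1 i q.2 :=
    measurable_update'
  refine ⟨hmeas, (Measure.pi_eq fun s hs => ?_).symm⟩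
  have preimage_eq : (fun q : (∀ j, X j) × X i => Function.update q.1 i q.2) ⁻¹' Set.univ.pi s =
      Set.univ.pi (Function.update s i Set.univ) ×ˢ s i := by
    ext q
    simp only [Set.mem_preimage, Set.mem_univ_pi, Set.mem_prod,
      Function.forall_update_iff q.1 (fun j x => x ∈ s j),
      Function.forall_update_iff s (fun j t => q.1 j ∈ t), Set.mem_univ, true_and, and_comm]
  rw [Measure.map_apply hmeas (.univ_pi hs), preimage_eq, Measure.prod_prod, Measure.pi_pi,
    ← Finset.prod_erase_mul _ _ (Finset.mem_univ i),
    ← Finset.prod_erase_mul _ (fun j => μ j (s j)) (Finset.mem_univ i), Function.update_self,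
    measure_univ, mul_one]
  congr 1
  exact Finset.prod_congr rfl fun j hj => by rw [Function.update_of_ne (Finset.ne_of_mem_erase hj)]

end Resampling

section StdGaussian

variable {ι : Type*} [Fintype ι]

/-- The law of a standard Gaussian vector: independent `N(0, 1)` coordinates indexed by `ι`.  It
lives on the plain function type `ι → ℝ`, so that the Euclidean inner product is `⬝ᵥ`. -/
noncomputable abbrev stdGaussianPi (ι : Type*) [Fintype ι] : Measure (ι → ℝ) :=
  Measure.pi fun _ => gaussianReal 0 1

theorem memLp_coord_stdGaussianPi (i : ι) (p : NNReal) :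
    MemLp (fun w : ι → ℝ => w i) p (stdGaussianPi ι) :=
  (memLp_id_gaussianReal p).comp_measurePreserving
    (measurePreserving_eval (fun _ : ι => gaussianReal 0 1) i)

theorem integrable_stdGaussianPi : Integrable (fun w : ι → ℝ => w) (stdGaussianPi ι) :=
  .of_eval fun i => memLp_one_iff_integrable.1 (memLp_coord_stdGaussianPi i 1)

theorem integral_coord_mul_stdGaussianPi [DecidableEq ι] (i : ι) {f f' : (ι → ℝ) → ℝ}
    (hf : ∀ w, HasDerivAt (fun t => f (Function.update w i t)) (f' w) (w i))
    (hf_int : Integrable f (stdGaussianPi ι)) (hf'_int : Integrable f' (stdGaussianPi ι))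
    (hwf_int : Integrable (fun w => w i * f w) (stdGaussianPi ι)) :
    ∫ w, w i * f w ∂stdGaussianPi ι = ∫ w, f' w ∂stdGaussianPi ι := by
  have resample := measurePreserving_update (fun _ : ι => gaussianReal 0 1) i
  have integral_resample : ∀ {h : (ι → ℝ) → ℝ}, Integrable h (stdGaussianPi ι) →
      ∫ w, h w ∂stdGaussianPi ι =
        ∫ w, ∫ x, h (Function.update w i x) ∂gaussianReal 0 1 ∂stdGaussianPi ι := fun hh =>
    (resample.hasLaw.integral_comp hh.1).symm.trans
      (integral_prod _ (resample.integrable_comp_of_integrable hh))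
  have slice_int : ∀ {h : (ι → ℝ) → ℝ}, Integrable h (stdGaussianPi ι) →
      ∀ᵐ w ∂stdGaussianPi ι, Integrable (fun x => h (Function.update w i x)) (gaussianReal 0 1) :=
    fun hh => (resample.integrable_comp_of_integrable hh).prod_right_ae
  rw [integral_resample hwf_int, integral_resample hf'_int]
  refine integral_congr_ae ?_
  filter_upwards [slice_int hf_int, slice_int hf'_int, slice_int hwf_int] with w h h' hw
  have slice_deriv : ∀ x, HasDerivAt (fun t => f (Function.update w i t))
      (f' (Function.update w i x)) x := fun x => by
    simpa only [Function.update_idem, Function.update_self] using hf (Function.update w i x)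
  simpa using integral_sub_mul_gaussianReal 0 1 slice_deriv h h' (by simpa using hw)

theorem integral_dotProduct_stdGaussianPi [DecidableEq ι] {F F' : (ι → ℝ) → ι → ℝ}
    (hF : ∀ w i, HasDerivAt (fun t => F (Function.update w i t) i) (F' w i) (w i))
    (hF_int : Integrable F (stdGaussianPi ι)) (hF'_int : Integrable F' (stdGaussianPi ι))
    (hwF_int : Integrable (fun w => w * F w) (stdGaussianPi ι)) :
    ∫ w, w ⬝ᵥ F w ∂stdGaussianPi ι = ∫ w, ∑ i, F' w i ∂stdGaussianPi ι := by
  have wF_int : ∀ i, Integrable (fun w => w i * F w i) (stdGaussianPi ι) := hwF_int.eval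
  simp only [dotProduct]
  rw [integral_finsetSum _ fun i _ => wF_int i, integral_finsetSum _ fun i _ => hF'_int.eval i]
  exact Finset.sum_congr rfl fun i _ => integral_coord_mul_stdGaussianPi i (fun w => hF w i)
    (hF_int.eval i) (hF'_int.eval i) (wF_int i)

end StdGaussian

section LogSumExp

variable {A : Type*} [Fintype A]

/-- The function `s ↦ log ∑ exp s`, a smooth substitute for the maximum of finitely many reals. -/
noncomputable def logSumExp (s : A → ℝ) : ℝ :=
  log (∑ a, exp (s a))

/-- The Gibbs weights `exp (s a) / ∑ exp s`, which form the gradient of `logSumExp`. -/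
noncomputable def softmax (s : A → ℝ) (a : A) : ℝ :=
  exp (s a) / ∑ b, exp (s b)

theorem softmax_nonneg (s : A → ℝ) (a : A) : 0 ≤ softmax s a := by
  unfold softmax
  positivity

variable [Nonempty A]

theorem sum_exp_pos (s : A → ℝ) : 0 < ∑ a, exp (s a) :=
  Finset.sum_pos (fun _ _ => exp_pos _) Finset.univ_nonempty

theorem sum_softmax (s : A → ℝ) : ∑ a, softmax s a = 1 := by
  unfold softmax
  rw [← Finset.sum_div, div_self (sum_exp_pos s).ne']

theorem norm_softmax_le_one (s : A → ℝ) : ‖softmax s‖ ≤ 1 := by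
  refine (pi_norm_le_iff_of_nonneg zero_le_one).2 fun a => ?_
  rw [norm_of_nonneg (softmax_nonneg s a), ← sum_softmax s]
  exact Finset.single_le_sum (fun b _ => softmax_nonneg s b) (Finset.mem_univ a)

theorem abs_softmax_dotProduct_le (s r : A → ℝ) : |softmax s ⬝ᵥ r| ≤ ‖r‖ :=
  calc |softmax s ⬝ᵥ r| ≤ ∑ a, |softmax s a * r a| := Finset.abs_sum_le_sum_abs _ _
    _ ≤ ∑ a, softmax s a * ‖r‖ := Finset.sum_le_sum fun a _ => by
      rw [abs_mul, abs_of_nonneg (softmax_nonneg s a)]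
      exact mul_le_mul_of_nonneg_left (norm_le_pi_norm r a) (softmax_nonneg s a)
    _ = ‖r‖ := by rw [← Finset.sum_mul, sum_softmax, one_mul]

@[fun_prop]
theorem continuous_softmax : Continuous (softmax : (A → ℝ) → A → ℝ) :=
  continuous_pi fun _ => .div (by fun_prop) (by fun_prop) fun s => (sum_exp_pos s).ne'

@[fun_prop]
theorem continuous_logSumExp : Continuous (logSumExp : (A → ℝ) → ℝ) :=
  .log (by fun_prop) fun s => (sum_exp_pos s).ne'

theorem le_logSumExp (s : A → ℝ) (a : A) : s a ≤ logSumExp s := by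
  rw [logSumExp, le_log_iff_exp_le (sum_exp_pos s)]
  exact Finset.single_le_sum (fun b _ => (exp_pos (s b)).le) (Finset.mem_univ a)

theorem iSup_le_logSumExp (s : A → ℝ) : ⨆ a, s a ≤ logSumExp s :=
  ciSup_le (le_logSumExp s)

theorem logSumExp_le_log_card_add {s : A → ℝ} {B : ℝ} (hs : ∀ a, s a ≤ B) :
    logSumExp s ≤ log (Fintype.card A) + B := by
  have card_pos : (0 : ℝ) < Fintype.card A := by exact_mod_cast Fintype.card_pos
  rw [logSumExp, log_le_iff_le_exp (sum_exp_pos s), exp_add, exp_log card_pos]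
  calc ∑ a, exp (s a) ≤ ∑ _a : A, exp B := Finset.sum_le_sum fun a _ => exp_le_exp.2 (hs a)
    _ = Fintype.card A * exp B := by rw [Finset.sum_const, Finset.card_univ, nsmul_eq_mul]

theorem logSumExp_le_log_card_add_iSup (s : A → ℝ) :
    logSumExp s ≤ log (Fintype.card A) + ⨆ a, s a :=
  logSumExp_le_log_card_add (le_ciSup (Set.finite_range s).bddAbove)

theorem abs_logSumExp_le (s : A → ℝ) : |logSumExp s| ≤ log (Fintype.card A) + ‖s‖ := by
  obtain ⟨a⟩ := ‹Nonempty A›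
  have log_card_nonneg : 0 ≤ log (Fintype.card A : ℝ) := log_natCast_nonneg _
  have coord_le : ∀ b, |s b| ≤ ‖s‖ := norm_le_pi_norm s
  refine abs_le.2 ⟨?_, logSumExp_le_log_card_add fun b => le_of_abs_le (coord_le b)⟩
  linarith [neg_le_of_abs_le (coord_le a), le_logSumExp s a]

section Deriv

variable {s : ℝ → A → ℝ} {s' : A → ℝ} {t : ℝ}

theorem hasDerivAt_logSumExp (hs : HasDerivAt s s' t) :
    HasDerivAt (fun r => logSumExp (s r)) (softmax (s t) ⬝ᵥ s') t := by
  have hsum := HasDerivAt.fun_sum fun a (_ : a ∈ Finset.univ) => (hasDerivAt_pi.1 hs a).exp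
  refine (hsum.log (sum_exp_pos (s t)).ne').congr_deriv ?_
  rw [Finset.sum_div]
  exact Finset.sum_congr rfl fun a _ => by rw [softmax, div_mul_eq_mul_div]

theorem softmax_eq_exp_sub_logSumExp (s : A → ℝ) (a : A) :
    softmax s a = exp (s a - logSumExp s) := by
  rw [softmax, exp_sub, logSumExp, exp_log (sum_exp_pos s)]

theorem hasDerivAt_softmax (hs : HasDerivAt s s' t) (a : A) :
    HasDerivAt (fun r => softmax (s r) a)
      (softmax (s t) a * (s' a - softmax (s t) ⬝ᵥ s')) t := by
  simp only [softmax_eq_exp_sub_logSumExp _ a]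
  exact ((hasDerivAt_pi.1 hs a).sub (hasDerivAt_logSumExp hs)).exp

end Deriv

end LogSumExp

section SoftmaxIntegral

variable {A ι : Type*} [Fintype ι]

theorem hasDerivAt_mulVec [Finite A] {w : ℝ → ι → ℝ} {w' : ι → ℝ} {t : ℝ} (U : Matrix A ι ℝ)
    (hw : HasDerivAt w w' t) : HasDerivAt (fun r => U *ᵥ w r) (U *ᵥ w') t :=
  have := Fintype.ofFinite A
  U.mulVecLin.toContinuousLinearMap.hasFDerivAt.comp_hasDerivAt t hw

variable [Fintype A]

theorem sum_mul_dotProduct_sub_vecMul {p : A → ℝ} (hp : ∑ a, p a = 1) (U V : Matrix A ι ℝ) :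
    ∑ a, p a * (V.row a ⬝ᵥ (U.row a - p ᵥ* U)) =
      (∑ a, ∑ b, p a * p b * ((V.row a - V.row b) ⬝ᵥ (U.row a - U.row b))) / 2 := by
  have centered : ∀ a, U.row a - p ᵥ* U = ∑ b, p b • (U.row a - U.row b) := fun a => by
    ext i
    simp [row, vecMul, dotProduct, mul_sub, Finset.sum_sub_distrib, ← Finset.sum_mul, hp]
  have expand : ∑ a, p a * (V.row a ⬝ᵥ (U.row a - p ᵥ* U)) =
      ∑ a, ∑ b, p a * p b * (V.row a ⬝ᵥ (U.row a - U.row b)) := by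
    simp only [centered, dotProduct_sum, dotProduct_smul, smul_eq_mul, Finset.mul_sum, mul_assoc]
  have swap : ∑ a, ∑ b, p a * p b * (V.row a ⬝ᵥ (U.row a - U.row b)) =
      ∑ a, ∑ b, p a * p b * (V.row b ⬝ᵥ (U.row b - U.row a)) := by
    rw [Finset.sum_comm]
    exact Finset.sum_congr rfl fun a _ => Finset.sum_congr rfl fun b _ => by
      rw [mul_comm (p b)]
  rw [expand, eq_div_iff two_ne_zero, mul_two]
  nth_rewrite 2 [swap]
  simp only [← Finset.sum_add_distrib]
  refine Finset.sum_congr rfl fun a _ => Finset.sum_congr rfl fun b _ => ?_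
  rw [sub_dotProduct, ← neg_sub (U.row a) (U.row b), dotProduct_neg]
  ring

theorem integrable_mulVec (U : Matrix A ι ℝ) :
    Integrable (fun w => U *ᵥ w) (stdGaussianPi ι) :=
  U.mulVecLin.toContinuousLinearMap.integrable_comp integrable_stdGaussianPi

variable [Nonempty A]

theorem integrable_softmax (U : Matrix A ι ℝ) :
    Integrable (fun w => softmax (U *ᵥ w)) (stdGaussianPi ι) :=
  .of_bound (by fun_prop) 1 (ae_of_all _ fun _ => norm_softmax_le_one _)

theorem integrable_softmax_dotProduct (U V : Matrix A ι ℝ) :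
    Integrable (fun w => softmax (U *ᵥ w) ⬝ᵥ (V *ᵥ w)) (stdGaussianPi ι) :=
  (integrable_mulVec V).norm.mono' (by fun_prop)
    (ae_of_all _ fun _ => abs_softmax_dotProduct_le _ _)

theorem integrable_logSumExp (U : Matrix A ι ℝ) :
    Integrable (fun w => logSumExp (U *ᵥ w)) (stdGaussianPi ι) :=
  ((integrable_const _).add (integrable_mulVec U).norm).mono' (by fun_prop)
    (ae_of_all _ fun _ => abs_logSumExp_le _)

theorem hasDerivAt_softmax_mulVec_update [DecidableEq ι] (U : Matrix A ι ℝ) (a : A) (w : ι → ℝ)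
    (i : ι) :
    HasDerivAt (fun t => softmax (U *ᵥ Function.update w i t) a)
      (softmax (U *ᵥ w) a * (U.row a - softmax (U *ᵥ w) ᵥ* U) i) (w i) := by
  have h := hasDerivAt_softmax (hasDerivAt_mulVec U (hasDerivAt_update w i (w i))) a
  rwa [Function.update_eq_self, Matrix.mulVec_single_one] at h

theorem integral_softmax_dotProduct (U V : Matrix A ι ℝ) :
    ∫ w, softmax (U *ᵥ w) ⬝ᵥ (V *ᵥ w) ∂stdGaussianPi ι =
      ∫ w, ∑ a, softmax (U *ᵥ w) a * (V.row a ⬝ᵥ (U.row a - softmax (U *ᵥ w) ᵥ* U))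
        ∂stdGaussianPi ι := by
  classical
  have vecMul_int : ∀ W : Matrix A ι ℝ,
      Integrable (fun w => softmax (U *ᵥ w) ᵥ* W) (stdGaussianPi ι) := fun W =>
    W.vecMulLinear.toContinuousLinearMap.integrable_comp (integrable_softmax U)
  have abs_softmax_le_one : ∀ a (w : ι → ℝ), ‖softmax (U *ᵥ w) a‖ ≤ 1 := fun a _ =>
    (norm_le_pi_norm _ a).trans (norm_softmax_le_one _)
  have deriv_int : ∀ a i, Integrable
      (fun w => softmax (U *ᵥ w) a * (U.row a - softmax (U *ᵥ w) ᵥ* U) i * V a i)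
      (stdGaussianPi ι) := fun a i =>
    ((((integrable_const (U.row a)).sub (vecMul_int U)).eval i).bdd_mul (by fun_prop)
      (ae_of_all _ (abs_softmax_le_one a))).mul_const _
  have mul_vecMul_int : Integrable (fun w => w * (softmax (U *ᵥ w) ᵥ* V)) (stdGaussianPi ι) :=
    .of_eval fun i => (integrable_stdGaussianPi.eval i).mul_bdd (by fun_prop)
      (ae_of_all _ fun _ => abs_softmax_dotProduct_le _ (V.col i))
  have stein := integral_dotProduct_stdGaussianPi
    (fun w i => HasDerivAt.fun_sum fun a _ =>
      (hasDerivAt_softmax_mulVec_update U a w i).mul_const (V a i))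
    (vecMul_int V) (.of_eval fun i => integrable_finsetSum _ fun a _ => deriv_int a i)
    mul_vecMul_int
  calc ∫ w, softmax (U *ᵥ w) ⬝ᵥ (V *ᵥ w) ∂stdGaussianPi ι
      = ∫ w, w ⬝ᵥ (softmax (U *ᵥ w) ᵥ* V) ∂stdGaussianPi ι := by
        simp only [dotProduct_mulVec, dotProduct_comm]
    _ = _ := stein
    _ = _ := by
        simp only [dotProduct, Finset.mul_sum, row_apply, ← mul_assoc, mul_right_comm _ (V _ _)]
        simp_rw [Finset.sum_comm (α := ι)]

theorem integral_softmax_dotProduct_nonneg {U V : Matrix A ι ℝ}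
    (h : ∀ a b, 0 ≤ (V.row a - V.row b) ⬝ᵥ (U.row a - U.row b)) :
    0 ≤ ∫ w, softmax (U *ᵥ w) ⬝ᵥ (V *ᵥ w) ∂stdGaussianPi ι := by
  rw [integral_softmax_dotProduct]
  refine integral_nonneg fun w => ?_
  simp only [Pi.zero_apply, sum_mul_dotProduct_sub_vecMul (sum_softmax (U *ᵥ w))]
  exact div_nonneg (Finset.sum_nonneg fun a _ => Finset.sum_nonneg fun b _ =>
    mul_nonneg (mul_nonneg (softmax_nonneg _ a) (softmax_nonneg _ b)) (h a b)) zero_le_two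

end SoftmaxIntegral

section Interpolation

variable {A ι : Type*}

/-- The path from `X` at `t = 0` to `Z` at `t = π / 2` used to compare the processes `X *ᵥ w` and
`Z *ᵥ w`. -/
noncomputable def circularPath (X Z : Matrix A ι ℝ) (t : ℝ) : Matrix A ι ℝ :=
  cos t • X + sin t • Z

variable [Fintype ι]

theorem circularPath_increments {X Z : Matrix A ι ℝ} (hXZ : X * Zᵀ = 0) (t : ℝ) (a b : A) :
    ((circularPath Z (-X) t).row a - (circularPath Z (-X) t).row b) ⬝ᵥ
        ((circularPath X Z t).row a - (circularPath X Z t).row b) =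
      cos t * sin t * ((Z.row a - Z.row b) ⬝ᵥ (Z.row a - Z.row b) -
        (X.row a - X.row b) ⬝ᵥ (X.row a - X.row b)) := by
  have row_sub : ∀ Y W : Matrix A ι ℝ, (circularPath Y W t).row a - (circularPath Y W t).row b =
      cos t • (Y.row a - Y.row b) + sin t • (W.row a - W.row b) := fun Y W => by
    ext i
    simp only [circularPath, row, Matrix.add_apply, Matrix.smul_apply, Pi.sub_apply, Pi.add_apply,
      Pi.smul_apply, smul_eq_mul]
    ring
  have orthogonal : ∀ c d, X.row c ⬝ᵥ Z.row d = 0 := fun c d => congr_fun₂ hXZ c d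
  have orthogonal' : ∀ c d, Z.row c ⬝ᵥ X.row d = 0 := fun c d => by
    rw [dotProduct_comm, orthogonal]
  have neg_row : ∀ c, (-X).row c = -X.row c := fun _ => rfl
  simp only [row_sub, neg_row, add_dotProduct, dotProduct_add, smul_dotProduct, dotProduct_smul,
    sub_dotProduct, dotProduct_sub, neg_dotProduct, orthogonal, orthogonal', smul_eq_mul]
  ring

theorem hasDerivAt_circularPath_mulVec [Finite A] (X Z : Matrix A ι ℝ) (t : ℝ) (w : ι → ℝ) :
    HasDerivAt (fun r => circularPath X Z r *ᵥ w) (circularPath Z (-X) t *ᵥ w) t := by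
  cases nonempty_fintype A
  simp only [circularPath, add_mulVec, smul_mulVec, neg_mulVec]
  refine (((hasDerivAt_cos t).smul_const (X *ᵥ w)).add
    ((hasDerivAt_sin t).smul_const (Z *ᵥ w))).congr_deriv ?_
  simp only [neg_smul, smul_neg, add_comm]

variable [Fintype A]

theorem norm_circularPath_mulVec_le (X Z : Matrix A ι ℝ) (t : ℝ) (w : ι → ℝ) :
    ‖circularPath X Z t *ᵥ w‖ ≤ ‖X *ᵥ w‖ + ‖Z *ᵥ w‖ := by
  simp only [circularPath, add_mulVec, smul_mulVec]
  refine (norm_add_le _ _).trans (add_le_add ?_ ?_) <;> rw [norm_smul]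
  · exact mul_le_of_le_one_left (norm_nonneg _) (abs_cos_le_one t)
  · exact mul_le_of_le_one_left (norm_nonneg _) (abs_sin_le_one t)

variable [Nonempty A]

theorem hasDerivAt_integral_logSumExp {U U' : ℝ → Matrix A ι ℝ} {bound : (ι → ℝ) → ℝ}
    (hU : ∀ t w, HasDerivAt (fun r => U r *ᵥ w) (U' t *ᵥ w) t)
    (hbound : ∀ t w, ‖U' t *ᵥ w‖ ≤ bound w) (hbound_int : Integrable bound (stdGaussianPi ι))
    (t : ℝ) :
    HasDerivAt (fun r => ∫ w, logSumExp (U r *ᵥ w) ∂stdGaussianPi ι)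
      (∫ w, softmax (U t *ᵥ w) ⬝ᵥ (U' t *ᵥ w) ∂stdGaussianPi ι) t :=
  (hasDerivAt_integral_of_dominated_loc_of_deriv_le Filter.univ_mem
    (.of_forall fun r => (integrable_logSumExp (U r)).1) (integrable_logSumExp (U t))
    (integrable_softmax_dotProduct (U t) (U' t)).1
    (ae_of_all _ fun w r _ => (abs_softmax_dotProduct_le _ _).trans (hbound r w)) hbound_int
    (ae_of_all _ fun w r _ => hasDerivAt_logSumExp (hU r w))).2

theorem integral_logSumExp_le_of_mul_transpose_eq_zero {X Z : Matrix A ι ℝ} (hXZ : X * Zᵀ = 0)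
    (h : ∀ a b, (X.row a - X.row b) ⬝ᵥ (X.row a - X.row b) ≤
      (Z.row a - Z.row b) ⬝ᵥ (Z.row a - Z.row b)) :
    ∫ w, logSumExp (X *ᵥ w) ∂stdGaussianPi ι ≤ ∫ w, logSumExp (Z *ᵥ w) ∂stdGaussianPi ι := by
  have deriv := hasDerivAt_integral_logSumExp (hasDerivAt_circularPath_mulVec X Z)
    (norm_circularPath_mulVec_le Z (-X)) ((integrable_mulVec Z).norm.add (integrable_mulVec _).norm)
  have mono : MonotoneOn
      (fun t => ∫ w, logSumExp (circularPath X Z t *ᵥ w) ∂stdGaussianPi ι) (Set.Icc 0 (π / 2)) := by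
    refine monotoneOn_of_hasDerivWithinAt_nonneg (convex_Icc _ _)
      (fun t _ => (deriv t).continuousAt.continuousWithinAt)
      (fun t _ => (deriv t).hasDerivWithinAt) fun t ht => ?_
    rw [interior_Icc] at ht
    refine integral_softmax_dotProduct_nonneg fun a b => ?_
    rw [circularPath_increments hXZ]
    exact mul_nonneg (mul_nonneg (cos_nonneg_of_mem_Icc ⟨by linarith [ht.1, pi_pos], ht.2.le⟩)
      (sin_nonneg_of_nonneg_of_le_pi ht.1.le (by linarith [ht.2, pi_pos])))
      (sub_nonneg.2 (h a b))
  have endpoints := mono (Set.left_mem_Icc.2 (by positivity)) (Set.right_mem_Icc.2 (by positivity))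
    (by positivity : (0 : ℝ) ≤ π / 2)
  simpa only [circularPath, cos_zero, sin_zero, cos_pi_div_two, sin_pi_div_two, one_smul, zero_smul,
    add_zero, zero_add] using endpoints

end Interpolation

section SudakovFernique

theorem measurePreserving_comp_of_injective {ι κ X : Type*} [Fintype ι] [Fintype κ]
    [MeasurableSpace X] (μ : Measure X) [IsProbabilityMeasure μ] {e : ι → κ}
    (he : Function.Injective e) :
    MeasurePreserving (fun w : κ → X => w ∘ e) (Measure.pi fun _ => μ) (Measure.pi fun _ => μ) := by
  have indep := (iIndepFun_pi (μ := fun _ : κ => μ) (X := fun _ => id)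
    fun _ => aemeasurable_id).precomp he
  refine ⟨by fun_prop, (iIndepFun_iff_map_fun_eq_pi_map fun i => ?_).1 indep |>.trans ?_⟩
  · exact (measurable_pi_apply (e i)).aemeasurable
  · exact congr_arg Measure.pi (funext fun i => (measurePreserving_eval _ (e i)).map_eq)

variable {A ι κ : Type*}

theorem fromCols_row_sub_row (Y : Matrix A ι ℝ) (W : Matrix A κ ℝ) (a b : A) :
    (fromCols Y W).row a - (fromCols Y W).row b =
      Sum.elim (Y.row a - Y.row b) (W.row a - W.row b) := by
  ext (i | i) <;> rfl

theorem zero_row_sub_row (a b : A) :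
    (0 : Matrix A ι ℝ).row a - (0 : Matrix A ι ℝ).row b = 0 :=
  sub_self 0

theorem smul_row_sub_row (c : ℝ) (Y : Matrix A ι ℝ) (a b : A) :
    (c • Y).row a - (c • Y).row b = c • (Y.row a - Y.row b) :=
  (smul_sub c _ _).symm

variable [Fintype ι] [Fintype κ]

theorem integral_iSup_smul_mulVec {c : ℝ} (hc : 0 ≤ c) (U : Matrix A ι ℝ) :
    ∫ w, ⨆ a, ((c • U) *ᵥ w) a ∂stdGaussianPi ι = c * ∫ w, ⨆ a, (U *ᵥ w) a ∂stdGaussianPi ι := by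
  simp only [← integral_const_mul, mul_iSup_of_nonneg hc, smul_mulVec, Pi.smul_apply, smul_eq_mul]

theorem integrable_iSup_mulVec [Finite A] [Nonempty A] (U : Matrix A ι ℝ) :
    Integrable (fun w => ⨆ a, (U *ᵥ w) a) (stdGaussianPi ι) := by
  cases nonempty_fintype A
  refine (integrable_mulVec U).norm.mono'
    (Measurable.iSup fun a => by fun_prop).aestronglyMeasurable (ae_of_all _ fun w => ?_)
  obtain ⟨a, ha⟩ := exists_eq_ciSup_of_finite (f := U *ᵥ w)
  rw [← ha]
  exact norm_le_pi_norm _ a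

section Smoothing

variable [Fintype A] [Nonempty A]

theorem integral_logSumExp_le {X : Matrix A ι ℝ} {Z : Matrix A κ ℝ}
    (h : ∀ a b, (X.row a - X.row b) ⬝ᵥ (X.row a - X.row b) ≤
      (Z.row a - Z.row b) ⬝ᵥ (Z.row a - Z.row b)) :
    ∫ w, logSumExp (X *ᵥ w) ∂stdGaussianPi ι ≤ ∫ w, logSumExp (Z *ᵥ w) ∂stdGaussianPi κ := by
  have law_inl := (measurePreserving_comp_of_injective (gaussianReal 0 1)
    (Sum.inl_injective (α := ι) (β := κ))).hasLaw
  have law_inr := (measurePreserving_comp_of_injective (gaussianReal 0 1)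
    (Sum.inr_injective (α := ι) (β := κ))).hasLaw
  have comparison := integral_logSumExp_le_of_mul_transpose_eq_zero
    (X := fromCols X (0 : Matrix A κ ℝ)) (Z := fromCols (0 : Matrix A ι ℝ) Z)
    (by simp [transpose_fromCols, fromCols_mul_fromRows]) fun a b => by
      simpa only [fromCols_row_sub_row, sumElim_dotProduct_sumElim, zero_row_sub_row,
        zero_dotProduct, add_zero, zero_add] using h a b
  simp only [fromCols_mulVec, zero_mulVec, add_zero, zero_add] at comparison
  rwa [← law_inl.integral_comp (integrable_logSumExp X).1,
    ← law_inr.integral_comp (integrable_logSumExp Z).1]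

theorem integral_iSup_mulVec_le_log_card_add {X : Matrix A ι ℝ} {Z : Matrix A κ ℝ}
    (h : ∀ a b, (X.row a - X.row b) ⬝ᵥ (X.row a - X.row b) ≤
      (Z.row a - Z.row b) ⬝ᵥ (Z.row a - Z.row b)) :
    ∫ w, ⨆ a, (X *ᵥ w) a ∂stdGaussianPi ι ≤
      log (Fintype.card A) + ∫ w, ⨆ a, (Z *ᵥ w) a ∂stdGaussianPi κ :=
  calc ∫ w, ⨆ a, (X *ᵥ w) a ∂stdGaussianPi ι
      ≤ ∫ w, logSumExp (X *ᵥ w) ∂stdGaussianPi ι :=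
        integral_mono (integrable_iSup_mulVec X) (integrable_logSumExp X)
          fun _ => iSup_le_logSumExp _
    _ ≤ ∫ w, logSumExp (Z *ᵥ w) ∂stdGaussianPi κ := integral_logSumExp_le h
    _ ≤ ∫ w, (log (Fintype.card A) + ⨆ a, (Z *ᵥ w) a) ∂stdGaussianPi κ :=
        integral_mono (integrable_logSumExp Z) ((integrable_const _).add (integrable_iSup_mulVec Z))
          fun _ => logSumExp_le_log_card_add_iSup _
    _ = log (Fintype.card A) + ∫ w, ⨆ a, (Z *ᵥ w) a ∂stdGaussianPi κ := by
        rw [integral_add (integrable_const _) (integrable_iSup_mulVec Z), integral_const,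
          probReal_univ, one_smul]

end Smoothing

theorem integral_iSup_mulVec_le [Finite A] [Nonempty A] {X : Matrix A ι ℝ} {Z : Matrix A κ ℝ}
    (h : ∀ a b, (X.row a - X.row b) ⬝ᵥ (X.row a - X.row b) ≤
      (Z.row a - Z.row b) ⬝ᵥ (Z.row a - Z.row b)) :
    ∫ w, ⨆ a, (X *ᵥ w) a ∂stdGaussianPi ι ≤ ∫ w, ⨆ a, (Z *ᵥ w) a ∂stdGaussianPi κ := by
  cases nonempty_fintype A
  have : 0 ≤ log (Fintype.card A : ℝ) := log_natCast_nonneg _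
  refine le_of_forall_pos_le_add fun ε hε => ?_
  -- Scaling both processes by `c` divides the additive error `log (card A)` by `c`.
  set c : ℝ := (log (Fintype.card A) + 1) / ε
  have c_pos : 0 < c := by positivity
  have c_mul_ε : c * ε = log (Fintype.card A) + 1 := div_mul_cancel₀ _ hε.ne'
  have scaled := integral_iSup_mulVec_le_log_card_add (X := c • X) (Z := c • Z) fun a b => by
    simp only [smul_row_sub_row, smul_dotProduct, dotProduct_smul, smul_eq_mul]
    gcongr
    exact h a b
  rw [integral_iSup_smul_mulVec c_pos.le, integral_iSup_smul_mulVec c_pos.le] at scaled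
  refine le_of_mul_le_mul_left ?_ c_pos
  linarith

end SudakovFernique

section Net

variable {T ι κ : Type*} [Fintype ι] [Fintype κ]

theorem exists_finset_dist_lt {E : Type*} [PseudoMetricSpace E] [ProperSpace E] {x : T → E}
    (hx : Bornology.IsBounded (Set.range x)) {ε : ℝ} (hε : 0 < ε) :
    ∃ F : Finset T, ∀ t, ∃ s ∈ F, dist (x t) (x s) < ε := by
  classical
  obtain ⟨c, c_subset, c_finite, c_cover⟩ := Metric.finite_approx_of_totallyBounded
    (hx.isCompact_closure.totallyBounded.subset subset_closure) ε hε
  lift c to Finset E using c_finite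
  rw [← Set.image_univ, Finset.subset_set_image_iff] at c_subset
  obtain ⟨F, -, rfl⟩ := c_subset
  refine ⟨F, fun t => ?_⟩
  simpa using c_cover (Set.mem_range_self t)

theorem norm_le_sqrt_dotProduct_self (u : ι → ℝ) : ‖u‖ ≤ √(u ⬝ᵥ u) :=
  (pi_norm_le_iff_of_nonneg (sqrt_nonneg _)).2 fun i => abs_le_sqrt <| by
    rw [sq]
    exact Finset.single_le_sum (f := fun i => u i * u i) (fun j _ => mul_self_nonneg _)
      (Finset.mem_univ i)

theorem abs_dotProduct_le (u w : ι → ℝ) : |u ⬝ᵥ w| ≤ ‖u‖ * ∑ i, |w i| := by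
  rw [Finset.mul_sum]
  refine (Finset.abs_sum_le_sum_abs _ _).trans (Finset.sum_le_sum fun i _ => ?_)
  rw [abs_mul]
  exact mul_le_mul_of_nonneg_right (norm_le_pi_norm u i) (abs_nonneg _)

theorem isBounded_range_of_increments_le {x : T → ι → ℝ} {z : T → κ → ℝ}
    (hz : Bornology.IsBounded (Set.range z))
    (h : ∀ s t, (x s - x t) ⬝ᵥ (x s - x t) ≤ (z s - z t) ⬝ᵥ (z s - z t)) :
    Bornology.IsBounded (Set.range x) := by
  obtain ⟨C, hC⟩ := Metric.isBounded_range_iff.1 hz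
  refine Metric.isBounded_range_iff.2 ⟨√(C * (Fintype.card κ * C)), fun s t => ?_⟩
  have hst : ‖z s - z t‖ ≤ C := dist_eq_norm (z s) (z t) ▸ hC s t
  have hC0 : 0 ≤ C := (norm_nonneg _).trans hst
  have sum_abs_le : ∑ k, |(z s - z t) k| ≤ Fintype.card κ * C := by
    simpa using Finset.sum_le_card_nsmul Finset.univ _ C fun k _ =>
      (norm_le_pi_norm (z s - z t) k).trans hst
  rw [dist_eq_norm]
  refine (norm_le_sqrt_dotProduct_self _).trans (sqrt_le_sqrt ((h s t).trans ?_))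
  exact (le_abs_self _).trans ((abs_dotProduct_le _ _).trans (by gcongr))

end Net

section BoundedProcess

variable {T ι κ : Type*} [Fintype ι] [Fintype κ]

theorem bddAbove_range_dotProduct {x : T → ι → ℝ} (hx : Bornology.IsBounded (Set.range x))
    (w : ι → ℝ) : BddAbove (Set.range fun t => x t ⬝ᵥ w) := by
  obtain ⟨C, hC⟩ := hx.exists_norm_le
  refine ⟨C * ∑ i, |w i|, Set.forall_mem_range.2 fun t => ?_⟩
  have := hC _ (Set.mem_range_self t)
  exact (le_abs_self _).trans ((abs_dotProduct_le _ _).trans (by gcongr))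

theorem integrable_sum_abs : Integrable (fun w : ι → ℝ => ∑ i, |w i|) (stdGaussianPi ι) :=
  integrable_finsetSum _ fun i _ => (integrable_stdGaussianPi.eval i).abs

theorem integrable_iSup_dotProduct {x : T → ι → ℝ} (hx : Bornology.IsBounded (Set.range x)) :
    Integrable (fun w => ⨆ t, x t ⬝ᵥ w) (stdGaussianPi ι) := by
  have lsc : LowerSemicontinuous fun w => ⨆ t, x t ⬝ᵥ w :=
    lowerSemicontinuous_ciSup (bddAbove_range_dotProduct hx) fun t =>
      Continuous.lowerSemicontinuous (by fun_prop)
  obtain ⟨C, hC⟩ := hx.exists_norm_le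
  refine (integrable_sum_abs.const_mul |C|).mono' lsc.measurable.aestronglyMeasurable
    (ae_of_all _ fun w => ?_)
  have abs_le : ∀ t, |x t ⬝ᵥ w| ≤ |C| * ∑ i, |w i| := fun t =>
    (abs_dotProduct_le _ _).trans <| mul_le_mul_of_nonneg_right
      ((hC _ (Set.mem_range_self t)).trans (le_abs_self C)) (by positivity)
  rcases isEmpty_or_nonempty T with hT | ⟨⟨t⟩⟩
  · simpa using by positivity
  · exact abs_le'.2 ⟨Real.iSup_le (fun t => (abs_le'.1 (abs_le t)).1) (by positivity),
      (neg_le_neg (le_ciSup (bddAbove_range_dotProduct hx w) t)).trans (abs_le'.1 (abs_le t)).2⟩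

theorem integral_iSup_dotProduct_le_of_finset {x : T → ι → ℝ} {z : T → κ → ℝ}
    (hz : Bornology.IsBounded (Set.range z))
    (h : ∀ s t, (x s - x t) ⬝ᵥ (x s - x t) ≤ (z s - z t) ⬝ᵥ (z s - z t)) {F : Finset T}
    (hF : F.Nonempty) :
    ∫ w, ⨆ t : F, x t ⬝ᵥ w ∂stdGaussianPi ι ≤ ∫ w, ⨆ t, z t ⬝ᵥ w ∂stdGaussianPi κ := by
  have : Nonempty F := hF.to_subtype
  refine (integral_iSup_mulVec_le (X := .of fun t : F => x t) (Z := .of fun t : F => z t)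
    fun s t => h s t).trans (integral_mono (integrable_iSup_mulVec _)
      (integrable_iSup_dotProduct hz) fun w => ?_)
  exact ciSup_le fun t => le_ciSup (bddAbove_range_dotProduct hz w) t.1

theorem iSup_dotProduct_le_add_of_net [Nonempty T] {x : T → ι → ℝ} {F : Finset T} {δ : ℝ}
    (hF : ∀ t, ∃ s ∈ F, dist (x t) (x s) < δ) (w : ι → ℝ) :
    ⨆ t, x t ⬝ᵥ w ≤ (⨆ t : F, x t ⬝ᵥ w) + δ * ∑ i, |w i| := by
  refine ciSup_le fun t => ?_
  obtain ⟨s, hs, hts⟩ := hF t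
  have near : (x t - x s) ⬝ᵥ w ≤ δ * ∑ i, |w i| :=
    (le_abs_self _).trans <| (abs_dotProduct_le _ _).trans <| by
      rw [← dist_eq_norm]
      gcongr
  have le_sup := le_ciSup (Set.finite_range fun t : F => x t ⬝ᵥ w).bddAbove ⟨s, hs⟩
  rw [sub_dotProduct] at near
  linarith

theorem exists_finset_integral_iSup_dotProduct_le [Nonempty T] {x : T → ι → ℝ}
    (hx : Bornology.IsBounded (Set.range x)) {ε : ℝ} (hε : 0 < ε) :
    ∃ F : Finset T, F.Nonempty ∧ ∫ w, ⨆ t, x t ⬝ᵥ w ∂stdGaussianPi ι ≤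
      (∫ w, ⨆ t : F, x t ⬝ᵥ w ∂stdGaussianPi ι) + ε := by
  set K := ∫ w : ι → ℝ, ∑ i, |w i| ∂stdGaussianPi ι
  have : 0 ≤ K := integral_nonneg fun w => by positivity
  obtain ⟨F, hF⟩ := exists_finset_dist_lt hx (ε := ε / (K + 1)) (by positivity)
  have F_int := integrable_iSup_dotProduct (Set.finite_range fun t : F => x t).isBounded
  have error_int := (integrable_sum_abs (ι := ι)).const_mul (ε / (K + 1))
  refine ⟨F, (hF (Classical.arbitrary T)).imp fun _ h => h.1, ?_⟩
  calc ∫ w, ⨆ t, x t ⬝ᵥ w ∂stdGaussianPi ι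
      ≤ ∫ w, ((⨆ t : F, x t ⬝ᵥ w) + ε / (K + 1) * ∑ i, |w i|) ∂stdGaussianPi ι :=
        integral_mono (integrable_iSup_dotProduct hx) (F_int.add error_int)
          (iSup_dotProduct_le_add_of_net hF)
    _ = (∫ w, ⨆ t : F, x t ⬝ᵥ w ∂stdGaussianPi ι) + ε / (K + 1) * K := by
        rw [integral_add F_int error_int, integral_const_mul]
    _ ≤ (∫ w, ⨆ t : F, x t ⬝ᵥ w ∂stdGaussianPi ι) + ε := by
        gcongr
        rw [div_mul_eq_mul_div, div_le_iff₀ (by positivity)]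
        linarith

theorem integral_iSup_dotProduct_le {x : T → ι → ℝ} {z : T → κ → ℝ}
    (hz : Bornology.IsBounded (Set.range z))
    (h : ∀ s t, (x s - x t) ⬝ᵥ (x s - x t) ≤ (z s - z t) ⬝ᵥ (z s - z t)) :
    ∫ w, ⨆ t, x t ⬝ᵥ w ∂stdGaussianPi ι ≤ ∫ w, ⨆ t, z t ⬝ᵥ w ∂stdGaussianPi κ := by
  rcases isEmpty_or_nonempty T with hT | hT
  · simp
  refine le_of_forall_pos_le_add fun ε hε => ?_
  obtain ⟨F, F_nonempty, hF⟩ := exists_finset_integral_iSup_dotProduct_le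
    (isBounded_range_of_increments_le hz h) hε
  exact hF.trans (by gcongr; exact integral_iSup_dotProduct_le_of_finset hz h F_nonempty)

end BoundedProcess

section Chevet

theorem measurePreserving_sumElim (ι κ : Type*) [Fintype ι] [Fintype κ] :
    MeasurePreserving (fun p : (ι → ℝ) × (κ → ℝ) => Sum.elim p.1 p.2)
      ((stdGaussianPi ι).prod (stdGaussianPi κ)) (stdGaussianPi (ι ⊕ κ)) :=
  measurePreserving_sumPiEquivProdPi_symm fun _ => gaussianReal 0 1

theorem measurePreserving_vec (m n : Type*) [Fintype m] [Fintype n] :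
    MeasurePreserving (fun W : m → n → ℝ => vec (.of W)) (Measure.pi fun _ : m => stdGaussianPi n)
      (stdGaussianPi (n × m)) := by
  have hmeas : Measurable fun W : m → n → ℝ => vec (.of W) :=
    measurable_pi_lambda _ fun p => (measurable_pi_apply p.1).comp (measurable_pi_apply p.2)
  refine ⟨hmeas, (Measure.pi_eq fun s hs => ?_).symm⟩
  have preimage_eq : (fun W : m → n → ℝ => vec (.of W)) ⁻¹' Set.univ.pi s =
      Set.univ.pi fun i => Set.univ.pi fun j => s (j, i) := by
    ext W
    simp only [Set.mem_preimage, Set.mem_univ_pi, Prod.forall, vec, of_apply]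
    exact forall_comm
  rw [Measure.map_apply hmeas (.univ_pi hs), preimage_eq, Measure.pi_pi,
    Fintype.prod_prod_type_right]
  simp only [Measure.pi_pi]

section EuclideanNorm

variable {ι : Type*} [Fintype ι]

theorem dotProduct_self_nonneg (w : ι → ℝ) : 0 ≤ w ⬝ᵥ w :=
  Finset.sum_nonneg fun _ _ => mul_self_nonneg _

theorem integrable_dotProduct_self : Integrable (fun w => w ⬝ᵥ w) (stdGaussianPi ι) :=
  integrable_finsetSum _ fun i _ => by
    simpa only [sq] using (memLp_coord_stdGaussianPi i 2).integrable_sq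

theorem integral_dotProduct_self : ∫ w, w ⬝ᵥ w ∂stdGaussianPi ι = Fintype.card ι := by
  classical
  have stein := integral_dotProduct_stdGaussianPi (ι := ι) (F := fun w => w) (F' := fun _ _ => 1)
    (fun w i => by simpa using hasDerivAt_id' (w i)) integrable_stdGaussianPi
    (integrable_const _) (.of_eval fun i => by
      simpa only [Pi.mul_apply, sq] using (memLp_coord_stdGaussianPi i 2).integrable_sq)
  simpa using stein

theorem integrable_sqrt_dotProduct_self :
    Integrable (fun w => √(w ⬝ᵥ w)) (stdGaussianPi ι) := by
  refine ((integrable_const 1).add integrable_dotProduct_self).mono'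
    (Continuous.aestronglyMeasurable (by fun_prop)) (ae_of_all _ fun w => ?_)
  have self_nonneg := dotProduct_self_nonneg w
  rw [norm_of_nonneg (sqrt_nonneg _), Pi.add_apply, sqrt_le_left (by positivity)]
  nlinarith

theorem integral_sqrt_dotProduct_self_le :
    ∫ w, √(w ⬝ᵥ w) ∂stdGaussianPi ι ≤ √(Fintype.card ι) := by
  rw [← integral_dotProduct_self]
  exact strictConcaveOn_sqrt.concaveOn.le_map_integral continuous_sqrt.continuousOn isClosed_Ici
    (ae_of_all _ dotProduct_self_nonneg) integrable_dotProduct_self integrable_sqrt_dotProduct_self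

theorem dotProduct_le_sqrt_mul_sqrt (u w : ι → ℝ) : u ⬝ᵥ w ≤ √(u ⬝ᵥ u) * √(w ⬝ᵥ w) := by
  simpa only [dotProduct, sq] using Real.sum_mul_le_sqrt_mul_sqrt Finset.univ u w

theorem sub_dotProduct_sub_self (u w : ι → ℝ) :
    (u - w) ⬝ᵥ (u - w) = u ⬝ᵥ u + w ⬝ᵥ w - 2 * (u ⬝ᵥ w) := by
  rw [sub_dotProduct, dotProduct_sub, dotProduct_sub, dotProduct_comm w u]
  ring

end EuclideanNorm

variable {T ι κ : Type*} [Fintype ι] [Fintype κ]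

theorem isBounded_range_of_dotProduct_self_le {x : T → ι → ℝ} {C : ℝ}
    (hx : ∀ t, x t ⬝ᵥ x t ≤ C) : Bornology.IsBounded (Set.range x) :=
  isBounded_iff_forall_norm_le.2 ⟨√C, Set.forall_mem_range.2 fun t =>
    (norm_le_sqrt_dotProduct_self (x t)).trans (sqrt_le_sqrt (hx t))⟩

theorem vec_vecMulVec_dotProduct_vec (v : ι → ℝ) (y : κ → ℝ) (W : Matrix ι κ ℝ) :
    vec (vecMulVec v y) ⬝ᵥ vec W = v ⬝ᵥ W *ᵥ y := by
  rw [vec_dotProduct_vec, transpose_vecMulVec, vecMulVec_mul, trace_vecMulVec, dotProduct_comm,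
    dotProduct_mulVec]

/-- The coefficients of the Gaussian variable `Δ * ⟨v, g⟩ + ⟨v, G y⟩` in the entries of the
standard Gaussian vector `g` and matrix `G`, the latter listed by `Matrix.vec`. -/
def bilinearCoeff (Δ : ℝ) (v : ι → ℝ) (y : κ → ℝ) : ι ⊕ κ × ι → ℝ :=
  Sum.elim (Δ • v) (vec (vecMulVec v y))

/-- The coefficients of the Gaussian variable `⟨y, h⟩ + τ * ⟨v, g⟩` in the coordinates of the
standard Gaussian vectors `h` and `g`; it dominates the variable given by `bilinearCoeff`. -/
def splitCoeff (τ : ℝ) (v : ι → ℝ) (y : κ → ℝ) : κ ⊕ ι → ℝ :=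
  Sum.elim y (τ • v)

theorem bilinearCoeff_dotProduct_sumElim (Δ : ℝ) (v g : ι → ℝ) (y : κ → ℝ) (W : Matrix ι κ ℝ) :
    bilinearCoeff Δ v y ⬝ᵥ Sum.elim g (vec W) = Δ * (v ⬝ᵥ g) + v ⬝ᵥ W *ᵥ y := by
  rw [bilinearCoeff, sumElim_dotProduct_sumElim, smul_dotProduct, vec_vecMulVec_dotProduct_vec,
    smul_eq_mul]

theorem splitCoeff_dotProduct_sumElim (τ : ℝ) (v g : ι → ℝ) (y h : κ → ℝ) :
    splitCoeff τ v y ⬝ᵥ Sum.elim h g = y ⬝ᵥ h + τ * (v ⬝ᵥ g) := by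
  rw [splitCoeff, sumElim_dotProduct_sumElim, smul_dotProduct, smul_eq_mul]

theorem bilinearCoeff_dotProduct_bilinearCoeff (Δ : ℝ) (v v' : ι → ℝ) (y y' : κ → ℝ) :
    bilinearCoeff Δ v y ⬝ᵥ bilinearCoeff Δ v' y' = (Δ ^ 2 + y ⬝ᵥ y') * (v ⬝ᵥ v') := by
  rw [bilinearCoeff.eq_def Δ v', bilinearCoeff_dotProduct_sumElim, vecMulVec_mulVec,
    dotProduct_smul, dotProduct_smul, dotProduct_comm y', op_smul_eq_mul, smul_eq_mul]
  ring

theorem splitCoeff_dotProduct_splitCoeff (τ : ℝ) (v v' : ι → ℝ) (y y' : κ → ℝ) :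
    splitCoeff τ v y ⬝ᵥ splitCoeff τ v' y' = y ⬝ᵥ y' + τ ^ 2 * (v ⬝ᵥ v') := by
  rw [splitCoeff.eq_def τ v', splitCoeff_dotProduct_sumElim, dotProduct_smul, smul_eq_mul]
  ring

theorem bilinearCoeff_increments_le {Δ σ τ : ℝ} (hτ : τ ^ 2 = Δ ^ 2 + σ ^ 2) {v v' : ι → ℝ}
    {y y' : κ → ℝ} (hv : v ⬝ᵥ v = 1) (hv' : v' ⬝ᵥ v' = 1) (hy : y ⬝ᵥ y ≤ σ ^ 2)
    (hy' : y' ⬝ᵥ y' ≤ σ ^ 2) :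
    (bilinearCoeff Δ v y - bilinearCoeff Δ v' y') ⬝ᵥ
        (bilinearCoeff Δ v y - bilinearCoeff Δ v' y') ≤
      (splitCoeff τ v y - splitCoeff τ v' y') ⬝ᵥ (splitCoeff τ v y - splitCoeff τ v' y') := by
  have v_le : 0 ≤ 1 - v ⬝ᵥ v' := by
    linarith [sub_dotProduct_sub_self v v' ▸ dotProduct_self_nonneg (v - v')]
  have y_le : 0 ≤ σ ^ 2 - y ⬝ᵥ y' := by
    linarith [sub_dotProduct_sub_self y y' ▸ dotProduct_self_nonneg (y - y')]
  simp only [sub_dotProduct_sub_self, bilinearCoeff_dotProduct_bilinearCoeff,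
    splitCoeff_dotProduct_splitCoeff, hv, hv', hτ]
  linarith [mul_nonneg v_le y_le]

theorem isBounded_range_splitCoeff (τ : ℝ) {C : ℝ} {v : T → ι → ℝ} {y : T → κ → ℝ}
    (hv : ∀ t, v t ⬝ᵥ v t = 1) (hy : ∀ t, y t ⬝ᵥ y t ≤ C) :
    Bornology.IsBounded (Set.range fun t => splitCoeff τ (v t) (y t)) :=
  isBounded_range_of_dotProduct_self_le (C := C + τ ^ 2) fun t => by
    rw [splitCoeff_dotProduct_splitCoeff, hv, mul_one]
    gcongr
    exact hy t

theorem integral_iSup_splitCoeff_le {τ C : ℝ} (hτ : 0 ≤ τ) {v : T → ι → ℝ} {y : T → κ → ℝ}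
    (hv : ∀ t, v t ⬝ᵥ v t = 1) (hy : ∀ t, y t ⬝ᵥ y t ≤ C) :
    ∫ w, ⨆ t, splitCoeff τ (v t) (y t) ⬝ᵥ w ∂stdGaussianPi (κ ⊕ ι) ≤
      ∫ h, ⨆ t, y t ⬝ᵥ h ∂stdGaussianPi κ + τ * √(Fintype.card ι) := by
  rcases isEmpty_or_nonempty T with hT | hT
  · simp only [iSup_of_isEmpty, integral_zero, zero_add]
    positivity
  have y_bdd := isBounded_range_of_dotProduct_self_le hy
  have split_int := integrable_iSup_dotProduct (isBounded_range_splitCoeff τ hv hy)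
  have y_int := (integrable_iSup_dotProduct y_bdd).comp_fst (stdGaussianPi ι)
  have norm_int := (integrable_sqrt_dotProduct_self (ι := ι)).const_mul τ |>.comp_snd
    (stdGaussianPi κ)
  have law := measurePreserving_sumElim κ ι
  have pointwise : ∀ p : (κ → ℝ) × (ι → ℝ),
      ⨆ t, splitCoeff τ (v t) (y t) ⬝ᵥ Sum.elim p.1 p.2 ≤
        (⨆ t, y t ⬝ᵥ p.1) + τ * √(p.2 ⬝ᵥ p.2) := fun p => ciSup_le fun t => by
    have cauchy_schwarz := dotProduct_le_sqrt_mul_sqrt (v t) p.2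
    rw [hv, sqrt_one, one_mul] at cauchy_schwarz
    rw [splitCoeff_dotProduct_sumElim]
    gcongr
    exact le_ciSup (bddAbove_range_dotProduct y_bdd p.1) t
  rw [← law.hasLaw.integral_comp split_int.1]
  refine (integral_mono (law.integrable_comp_of_integrable split_int) (y_int.add norm_int)
    pointwise).trans ?_
  rw [integral_add' y_int norm_int, integral_fun_fst fun h => ⨆ t, y t ⬝ᵥ h,
    integral_fun_snd fun g => τ * √(g ⬝ᵥ g), integral_const_mul]
  simp only [probReal_univ, one_smul]
  gcongr
  exact integral_sqrt_dotProduct_self_le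

theorem integral_iSup_bilinear_le {Ω : Type*} [MeasurableSpace Ω] {P : Measure Ω} {g : Ω → ι → ℝ}
    {G : Ω → Matrix ι κ ℝ}
    (law : HasLaw (fun ω => Sum.elim (g ω) (vec (G ω))) (stdGaussianPi (ι ⊕ κ × ι)) P)
    (Δ : ℝ) {σ : ℝ} {v : T → ι → ℝ} {y : T → κ → ℝ} (hv : ∀ t, v t ⬝ᵥ v t = 1)
    (hy : ∀ t, y t ⬝ᵥ y t ≤ σ ^ 2) :
    ∫ ω, ⨆ t, (Δ * (v t ⬝ᵥ g ω) + v t ⬝ᵥ G ω *ᵥ y t) ∂P ≤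
      ∫ h, ⨆ t, y t ⬝ᵥ h ∂stdGaussianPi κ + √(Fintype.card ι * (Δ ^ 2 + σ ^ 2)) := by
  have hτ : √(Δ ^ 2 + σ ^ 2) ^ 2 = Δ ^ 2 + σ ^ 2 := sq_sqrt (by positivity)
  have split_bdd := isBounded_range_splitCoeff (√(Δ ^ 2 + σ ^ 2)) hv hy
  have increments := fun s t => bilinearCoeff_increments_le hτ (hv s) (hv t) (hy s) (hy t)
  have bilinear_int :=
    integrable_iSup_dotProduct (isBounded_range_of_increments_le split_bdd increments)
  calc ∫ ω, ⨆ t, (Δ * (v t ⬝ᵥ g ω) + v t ⬝ᵥ G ω *ᵥ y t) ∂P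
      = ∫ w, ⨆ t, bilinearCoeff Δ (v t) (y t) ⬝ᵥ w ∂stdGaussianPi (ι ⊕ κ × ι) := by
        simp only [← law.integral_comp bilinear_int.1, Function.comp_def,
          bilinearCoeff_dotProduct_sumElim]
    _ ≤ ∫ w, ⨆ t, splitCoeff (√(Δ ^ 2 + σ ^ 2)) (v t) (y t) ⬝ᵥ w ∂stdGaussianPi (κ ⊕ ι) :=
        integral_iSup_dotProduct_le split_bdd increments
    _ ≤ ∫ h, ⨆ t, y t ⬝ᵥ h ∂stdGaussianPi κ + √(Δ ^ 2 + σ ^ 2) * √(Fintype.card ι) :=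
        integral_iSup_splitCoeff_le (sqrt_nonneg _) hv hy
    _ = ∫ h, ⨆ t, y t ⬝ᵥ h ∂stdGaussianPi κ + √(Fintype.card ι * (Δ ^ 2 + σ ^ 2)) := by
        rw [mul_comm (Fintype.card ι : ℝ), sqrt_mul (by positivity)]

end Chevet

section Seminorm

section FiniteDimensional

variable {E : Type*} [NormedAddCommGroup E] [NormedSpace ℝ E] [FiniteDimensional ℝ E]

theorem continuous_seminorm (q : Seminorm ℝ E) : Continuous q :=
  q.convexOn.locallyLipschitz.continuous

theorem integrable_seminorm [MeasurableSpace E] [BorelSpace E] {μ : Measure E}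
    (hμ : Integrable (fun x => x) μ) (q : Seminorm ℝ E) : Integrable q μ := by
  obtain ⟨C, -, hC⟩ := q.bound_of_continuous_normedSpace (continuous_seminorm q)
  refine (hμ.norm.const_mul C).mono' (continuous_seminorm q).measurable.aestronglyMeasurable
    (ae_of_all _ fun x => ?_)
  rw [norm_of_nonneg (apply_nonneg q x)]
  exact hC x

end FiniteDimensional

variable {m n : Type*} [Fintype m] [Fintype n]

theorem integrable_seminorm_of (p : Seminorm ℝ (Matrix m n ℝ)) :
    Integrable (fun G : m → n → ℝ => p (.of G)) (Measure.pi fun _ : m => stdGaussianPi n) :=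
  integrable_seminorm (.of_eval fun i =>
    (measurePreserving_eval (fun _ : m => stdGaussianPi n) i).integrable_comp_of_integrable
      integrable_stdGaussianPi) (p.comp (ofLinearEquiv ℝ).toLinearMap)

theorem exists_seminorm_le_mul_sqrt (p : Seminorm ℝ (Matrix m n ℝ)) :
    ∃ C, 0 ≤ C ∧ ∀ X, p X ≤ C * √(vec X ⬝ᵥ vec X) := by
  obtain ⟨C, C_pos, hC⟩ := (p.comp (ofLinearEquiv ℝ).toLinearMap).bound_of_continuous_normedSpace
    (continuous_seminorm _)
  refine ⟨C, C_pos.le, fun X => (hC (of.symm X)).trans (mul_le_mul_of_nonneg_left ?_ C_pos.le)⟩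
  refine le_trans ?_ (norm_le_sqrt_dotProduct_self (vec X))
  exact (pi_norm_le_iff_of_nonneg (norm_nonneg _)).2 fun i =>
    (pi_norm_le_iff_of_nonneg (norm_nonneg _)).2 fun j => norm_le_pi_norm (vec X) (j, i)

theorem matInner_eq_vec_dotProduct_vec (X Y : Matrix m n ℝ) : matInner X Y = vec X ⬝ᵥ vec Y :=
  (vec_dotProduct_vec X Y).symm

theorem matInner_add_left (X X' Y : Matrix m n ℝ) :
    matInner (X + X') Y = matInner X Y + matInner X' Y := by
  simp only [matInner_eq_vec_dotProduct_vec, vec_add, add_dotProduct]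

theorem matInner_smul_left (c : ℝ) (X Y : Matrix m n ℝ) :
    matInner (c • X) Y = c * matInner X Y := by
  simp only [matInner_eq_vec_dotProduct_vec, vec_smul, smul_dotProduct, smul_eq_mul]

theorem vec_dotProduct_vec_self (X : Matrix m n ℝ) :
    vec X ⬝ᵥ vec X = ∑ i, ∑ j, X i j ^ 2 := by
  simp only [dotProduct, Fintype.sum_prod_type_right, vec, sq]

section Dual

variable {p : Seminorm ℝ (Matrix n n ℝ)} {Y : Matrix n n ℝ}

theorem matInner_le_one (hY : dualNorm p Y = 1) {X : Matrix n n ℝ} (hX : p X = 1) :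
    matInner X Y ≤ 1 := by
  rw [← hY]
  refine le_csSup (by_contra fun h => ?_) ⟨X, hX, rfl⟩
  exact zero_ne_one ((Real.sSup_of_not_bddAbove h).symm.trans hY)

theorem exists_seminorm_eq_one (hY : dualNorm p Y = 1) : ∃ Z, p Z = 1 := by
  by_contra! h
  simp [dualNorm, h] at hY

theorem matInner_nonpos_of_seminorm_eq_zero (hY : dualNorm p Y = 1) {X : Matrix n n ℝ}
    (hX : p X = 0) : matInner X Y ≤ 0 := by
  obtain ⟨Z, hZ⟩ := exists_seminorm_eq_one hY
  -- The unit sphere of `p` contains the whole line `Z + ℝ X`.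
  have line : ∀ t : ℝ, matInner Z Y + t * matInner X Y ≤ 1 := fun t => by
    have htX : p (t • X) = 0 := by rw [map_smul_eq_mul, hX, mul_zero]
    rw [← matInner_smul_left, ← matInner_add_left]
    refine matInner_le_one hY (le_antisymm ?_ ?_)
    · linarith [map_add_le_add p Z (t • X)]
    · linarith [map_sub_le_add p (Z + t • X) (t • X), congr_arg p (add_sub_cancel_right Z (t • X))]
  by_contra! pos
  have := line ((2 - matInner Z Y) / matInner X Y)
  rw [div_mul_cancel₀ _ pos.ne'] at this
  linarith

theorem matInner_le_seminorm (hY : dualNorm p Y = 1) (X : Matrix n n ℝ) : matInner X Y ≤ p X := by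
  rcases (apply_nonneg p X).eq_or_lt with hX | hX
  · exact hX ▸ matInner_nonpos_of_seminorm_eq_zero hY hX.symm
  · have normalized : p ((p X)⁻¹ • X) = 1 := by
      rw [map_smul_eq_mul, norm_of_nonneg (inv_nonneg.2 hX.le), inv_mul_cancel₀ hX.ne']
    have := matInner_le_one hY normalized
    rwa [matInner_smul_left, inv_mul_le_iff₀ hX, mul_one] at this

theorem vec_dotProduct_vec_self_le_sigmaP_sq (hY : dualNorm p Y = 1) :
    vec Y ⬝ᵥ vec Y ≤ sigmaP p ^ 2 := by
  obtain ⟨C, C_nonneg, hC⟩ := exists_seminorm_le_mul_sqrt p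
  have bdd : BddAbove {c : ℝ | ∃ Z : Matrix n n ℝ, dualNorm p Z = 1 ∧
      c = √(∑ i, ∑ j, Z i j ^ 2)} := by
    refine ⟨C, ?_⟩
    rintro _ ⟨Z, hZ, rfl⟩
    rw [← vec_dotProduct_vec_self]
    have self_le := (matInner_le_seminorm hZ Z).trans (hC Z)
    rw [matInner_eq_vec_dotProduct_vec] at self_le
    by_contra! lt
    refine self_le.not_gt ?_
    calc C * √(vec Z ⬝ᵥ vec Z)
        < √(vec Z ⬝ᵥ vec Z) * √(vec Z ⬝ᵥ vec Z) :=
          mul_lt_mul_of_pos_right lt (C_nonneg.trans_lt lt)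
      _ = vec Z ⬝ᵥ vec Z := mul_self_sqrt (dotProduct_self_nonneg _)
  refine (sqrt_le_left ?_).1 (le_csSup bdd ⟨Y, hY, by rw [vec_dotProduct_vec_self]⟩)
  exact Real.sSup_nonneg (by rintro _ ⟨Z, -, rfl⟩; exact sqrt_nonneg _)

end Dual

end Seminorm

section GaussianSeries

variable {ι n : Type*} [Fintype ι] [Fintype n]

theorem integral_iSup_vec_dotProduct_le (p : Seminorm ℝ (Matrix n n ℝ)) {T : Type*}
    {Y : T → Matrix n n ℝ} (hY : ∀ t, dualNorm p (Y t) = 1) :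
    ∫ h, ⨆ t, vec (Y t) ⬝ᵥ h ∂stdGaussianPi (n × n) ≤
      ∫ G : n → n → ℝ, p (.of G) ∂Measure.pi fun _ : n => stdGaussianPi n := by
  have sup_int := integrable_iSup_dotProduct (isBounded_range_of_dotProduct_self_le fun t =>
    vec_dotProduct_vec_self_le_sigmaP_sq (hY t))
  have law := measurePreserving_vec n n
  rw [← law.hasLaw.integral_comp sup_int.1]
  refine integral_mono (law.integrable_comp_of_integrable sup_int) (integrable_seminorm_of p)
    fun G => Real.iSup_le (fun t => ?_) (apply_nonneg p _)
  rw [dotProduct_comm, ← matInner_eq_vec_dotProduct_vec]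
  exact matInner_le_seminorm (hY t) _

theorem matInner_sum_smul (v : ι → ℝ) (G : ι → Matrix n n ℝ) (Y : Matrix n n ℝ) :
    matInner (∑ i, v i • G i) Y = v ⬝ᵥ (Matrix.of fun i => vec (G i)) *ᵥ vec Y := by
  simp only [matInner_eq_vec_dotProduct_vec, vec_sum, vec_smul, sum_dotProduct, smul_dotProduct,
    smul_eq_mul]
  rfl

theorem hasLaw_sumElim_vec_vec :
    HasLaw (fun ω : (ι → ℝ) × (ι → n → n → ℝ) =>
        Sum.elim ω.1 (vec (.of fun i => vec (.of (ω.2 i))))) (stdGaussianPi (ι ⊕ (n × n) × ι))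
      ((stdGaussianPi ι).prod
        (Measure.pi fun _ : ι => Measure.pi fun _ : n => stdGaussianPi n)) :=
  ((measurePreserving_sumElim ι ((n × n) × ι)).comp
    ((MeasurePreserving.id _).prod ((measurePreserving_vec ι (n × n)).comp
      (measurePreserving_pi _ _ fun _ => measurePreserving_vec n n)))).hasLaw

theorem stmt11_general (p : Seminorm ℝ (Matrix n n ℝ)) (Δ : ℝ) :
    (∫ ω : (ι → ℝ) × (ι → n → n → ℝ),
        (⨆ q : {q : (ι → ℝ) × Matrix n n ℝ //
            √(∑ i, q.1 i ^ 2) = 1 ∧ dualNorm p q.2 = 1},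
          Δ * (∑ i, ω.1 i * q.1.1 i) + matInner (∑ i, q.1.1 i • Matrix.of (ω.2 i)) q.1.2)
        ∂((stdGaussianPi ι).prod
            (Measure.pi fun _ : ι => Measure.pi fun _ : n => stdGaussianPi n)))
      ≤ (∫ G : n → n → ℝ, p (Matrix.of G) ∂Measure.pi fun _ : n => stdGaussianPi n) +
        √(Fintype.card ι * (Δ ^ 2 + sigmaP p ^ 2)) := by
  set T := {q : (ι → ℝ) × Matrix n n ℝ // √(∑ i, q.1 i ^ 2) = 1 ∧ dualNorm p q.2 = 1}
  have unit : ∀ t : T, t.1.1 ⬝ᵥ t.1.1 = 1 := fun t => by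
    simpa only [dotProduct, ← sq, sqrt_eq_one] using t.2.1
  have comparison := integral_iSup_bilinear_le hasLaw_sumElim_vec_vec Δ unit fun t : T =>
    vec_dotProduct_vec_self_le_sigmaP_sq t.2.2
  have sum_eq (g : ι → ℝ) (t : T) : ∑ i, g i * t.1.1 i = t.1.1 ⬝ᵥ g := dotProduct_comm g t.1.1
  simp only [sum_eq, matInner_sum_smul]
  refine comparison.trans ?_
  gcongr
  exact integral_iSup_vec_dotProduct_le p fun t : T => t.2.2

end GaussianSeries

/-- For `g` a standard Gaussian vector in `ℝ^M` and `G₁,…,G_M` i.i.d. standard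
Gaussian `D × D` matrices, all independent,
`E[sup_{‖v‖=1, ‖Y‖_d=1} Δ⟨g,v⟩ + ⟨Σ v_i G_i, Y⟩] ≤ E‖G‖_p + √(M(Δ² + σ(‖G‖_p)²))`. -/
theorem stmt11 (D M : ℕ) (N : Matrix (Fin D) (Fin D) ℝ → ℝ)
    (hN_add : ∀ X Y, N (X + Y) ≤ N X + N Y)
    (hN_smul : ∀ (c : ℝ) X, N (c • X) = |c| * N X)
    (hN_eq_zero : ∀ X, N X = 0 ↔ X = 0)
    (Δ : ℝ) (hΔ : 0 < Δ) :
    (∫ p : (Fin M → ℝ) × (Fin M → Fin D → Fin D → ℝ),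
        (⨆ q : {q : (Fin M → ℝ) × Matrix (Fin D) (Fin D) ℝ //
            Real.sqrt (∑ i, q.1 i ^ 2) = 1 ∧ dualNorm N q.2 = 1},
          Δ * (∑ i, p.1 i * q.1.1 i) +
            matInner (∑ i, q.1.1 i • Matrix.of (p.2 i)) q.1.2)
        ∂((Measure.pi fun _ : Fin M => gaussianReal 0 1).prod
            (Measure.pi fun _ : Fin M => iidGaussianMatrix D)))
      ≤ (∫ G : Fin D → Fin D → ℝ, N (Matrix.of G) ∂iidGaussianMatrix D) +
        Real.sqrt (M * (Δ ^ 2 + sigmaP N ^ 2)) :=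
  (stmt11_general (.of N hN_add hN_smul) Δ).trans_eq (by rw [Fintype.card_fin]; rfl)
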